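/- arXiv:2001.08265 — 2 statements merged into one kernel-verified Lean document; each statement's English description precedes it below -/
import Mathlib

section
/- Suppose F satisfies (G1) and the Perron–Frobenius operator P_σ of the base shift satisfies the Lasota–Yorke inequality ‖P_σ^n φ‖_θ ≤ θ^n ‖φ‖_θ + C₂‖φ‖_∞ for all d_θ-Lipschitz φ and n ≥ 1. Then, with α₁ = max{θ, α} and B₄ = C₂ + 1/(1−α), for every μ ∈ S^∞ and every n ≥ 1 it holds ‖F^{*n}μ‖_{S^∞} ≤ 2α₁^n ‖μ‖_{S^∞} + B₄ ‖μ‖_∞. -/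
open MeasureTheory ENNReal Set

namespace RDS

/-- The one-sided subshift of finite type `Σ_A^+` determined by the 0-1 matrix `A`. -/
abbrev SigmaA (N : ℕ) (A : Fin N → Fin N → Bool) :=
  {x : ℕ → Fin N // ∀ i, A (x i) (x (i + 1)) = true}

variable {N : ℕ} {A : Fin N → Fin N → Bool}

/-- The shift map `σ` on `Σ_A^+`. -/
def shift (x : SigmaA N A) : SigmaA N A :=
  ⟨fun i => x.val (i + 1), fun i => x.prop (i + 1)⟩

/-- Aperiodicity of a 0-1 matrix: some power has all entries positive. -/
def Aperiodic (A : Fin N → Fin N → Bool) : Prop :=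
  ∃ k : ℕ, 0 < k ∧ ∀ i j,
    0 < ((Matrix.of fun a b => if A a b then (1 : ℕ) else 0) ^ k) i j

/-- The metric `d_θ(x,y) = Σ_i θ^i (1 - δ(x_i, y_i))` on `Σ_A^+`. -/
noncomputable def dTheta (θ : ℝ) (x y : SigmaA N A) : ℝ :=
  ∑' i : ℕ, θ ^ i * (if x.val i = y.val i then (0 : ℝ) else 1)

/-- Cylinder sets of `Σ_A^+`. -/
def cylinder (n : ℕ) (w : Fin (n + 1) → Fin N) : Set (SigmaA N A) :=
  {x | ∀ i : Fin (n + 1), x.val i = w i}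

/-- `m` is a Markov measure on `Σ_A^+` compatible with `A`: it is given on
cylinders by a stochastic matrix `P` (vanishing where `A` vanishes) and a
stationary probability vector `p`. -/
def IsMarkov (m : Measure (SigmaA N A)) : Prop :=
  ∃ (p : Fin N → ℝ≥0∞) (P : Fin N → Fin N → ℝ≥0∞),
    (∑ i, p i = 1) ∧ (∀ i, ∑ j, P i j = 1) ∧ (∀ j, ∑ i, p i * P i j = p j) ∧
    (∀ i j, A i j = false → P i j = 0) ∧
    ∀ (n : ℕ) (w : Fin (n + 1) → Fin N),
      m (cylinder n w) = p (w 0) * ∏ i : Fin n, P (w i.castSucc) (w i.succ)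

/-- `σ_i⁻¹(γ)`: the sequence `γ` with the symbol `i` prepended
(defined when `A i γ₀ = 1`), i.e. the inverse branch of the restriction `σ_i`
of `σ` to the cylinder `[i]`. -/
def prepend (i : Fin N) (x : SigmaA N A) (h : A i (x.val 0) = true) : SigmaA N A :=
  ⟨fun n => match n with
    | 0 => i
    | Nat.succ k => x.val k,
   fun j => match j with
    | 0 => h
    | Nat.succ k => x.prop k⟩

/-- `f` is `L`-Lipschitz with respect to the distance function `d`. -/
def LipWithD {X : Type*} (d : X → X → ℝ) (L : ℝ) (f : X → ℝ) : Prop :=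
  ∀ x y, |f x - f y| ≤ L * d x y

/-- `f` is Lipschitz with respect to the distance function `d`. -/
def LipD {X : Type*} (d : X → X → ℝ) (f : X → ℝ) : Prop :=
  ∃ L : ℝ, LipWithD d L f

/-- The best Lipschitz constant of `f` with respect to `d` (valued in `ℝ≥0∞`). -/
noncomputable def lipConst {X : Type*} (d : X → X → ℝ) (f : X → ℝ) : ℝ≥0∞ :=
  ⨆ (x : X) (y : X), ENNReal.ofReal (|f x - f y| / d x y)

/-- The sup norm of `f` (valued in `ℝ≥0∞`). -/
noncomputable def supNormE {X : Type*} (f : X → ℝ) : ℝ≥0∞ :=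
  ⨆ x : X, ENNReal.ofReal |f x|

/-- The norm `‖f‖_θ = ‖f‖_∞ + Lip_d(f)`. -/
noncomputable def thetaNorm {X : Type*} (d : X → X → ℝ) (f : X → ℝ) : ℝ≥0∞ :=
  supNormE f + lipConst d f

/-- The Perron-Frobenius operator duality characterizing `P_σ`:
`∫ P_σ(φ) · ψ dm = ∫ φ · (ψ ∘ σ) dm` for integrable `φ` and bounded measurable `ψ`. -/
def IsPerronFrobenius (m : Measure (SigmaA N A))
    (Pσ : (SigmaA N A → ℝ) → SigmaA N A → ℝ) : Prop :=
  ∀ φ ψ : SigmaA N A → ℝ, Integrable φ m → Measurable ψ → (∃ C, ∀ x, |ψ x| ≤ C) →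
    ∫ x, Pσ φ x * ψ x ∂m = ∫ x, φ x * ψ (shift x) ∂m

/-- Spectral gap for `P_σ` on `d_θ`-Lipschitz functions with constants `D`, `r`:
`‖P_σ^n φ‖_θ ≤ D r^n ‖φ‖_θ` for all `n` and all `d_θ`-Lipschitz `φ` with
`∫ φ dm = 0`. -/
def HasGap (m : Measure (SigmaA N A)) (θ : ℝ)
    (Pσ : (SigmaA N A → ℝ) → SigmaA N A → ℝ) (D r : ℝ) : Prop :=
  ∀ φ : SigmaA N A → ℝ, LipD (dTheta θ) φ → (∫ x, φ x ∂m) = 0 →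
    ∀ n : ℕ, thetaNorm (dTheta θ) (Pσ^[n] φ) ≤
      ENNReal.ofReal (D * r ^ n) * thetaNorm (dTheta θ) φ

/-- `Jm i` is the Jacobian `J_{m,σ_i}` of `m` with respect to the branch `σ_i`
(the restriction of `σ` to the cylinder `[i]`): `m (σ_i(E)) = ∫_E J_{m,σ_i} dm`
for every measurable `E` (intersected with `[i]`). -/
def IsJacobian (m : Measure (SigmaA N A)) (Jm : Fin N → SigmaA N A → ℝ) : Prop :=
  ∀ (i : Fin N) (E : Set (SigmaA N A)), MeasurableSet E →
    m {γ : SigmaA N A | ∃ h : A i (γ.val 0) = true, prepend i γ h ∈ E} =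
      ∫⁻ x in E ∩ {x : SigmaA N A | x.val 0 = i}, ENNReal.ofReal (Jm i x) ∂m

variable {K : Type*} [MetricSpace K] [MeasurableSpace K]

/-- The Wasserstein-Kantorovich like distance `W(ν₁,ν₂)`: the supremum of
`|∫ g dν₁ - ∫ g dν₂|` over `g : K → ℝ` with `Lip(g) ≤ 1` and `‖g‖_∞ ≤ 1`.
Applied with `ν₂ = 0` it gives the norm `‖ν₁‖_W`; applied to the two parts of a
decomposition of a signed measure it gives its `‖·‖_W` norm. -/
noncomputable def wDist (ν₁ ν₂ : Measure K) : ℝ≥0∞ :=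
  ⨆ g : {g : K → ℝ // LipschitzWith 1 g ∧ ∀ z, |g z| ≤ 1},
    ENNReal.ofReal |∫ z, g.val z ∂ν₁ - ∫ z, g.val z ∂ν₂|

/-- The skew product `F(x,z) = (σ(x), G(x,z))`. -/
def skew (G : SigmaA N A × K → K) (p : SigmaA N A × K) : SigmaA N A × K :=
  (shift p.1, G p)

/-- The transfer operator `F^* μ (E) = μ (F⁻¹ E)` acting on signed measures. -/
noncomputable def transfer (G : SigmaA N A × K → K)
    (μ : SignedMeasure (SigmaA N A × K)) : SignedMeasure (SigmaA N A × K) :=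
  μ.map (skew G)

/-- Condition (G1): uniform contraction of the vertical fibers with rate `α`. -/
def CondG1 (G : SigmaA N A × K → K) (α : ℝ) : Prop :=
  ∀ (x : SigmaA N A) (z₁ z₂ : K), dist (G (x, z₁)) (G (x, z₂)) ≤ α * dist z₁ z₂

/-- Condition (G2): `x ↦ G(x,z)` is `d_θ`-Lipschitz with constant `H`,
uniformly in `z`. -/
def CondG2 (θ : ℝ) (G : SigmaA N A × K → K) (H : ℝ) : Prop :=
  ∀ (z : K) (x y : SigmaA N A), dist (G (x, z)) (G (y, z)) ≤ H * dTheta θ x y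

/-- `T` is (the path `γ ↦ μ|_γ` of) a disintegration of `μ` along the vertical
fibers, over the reference measure `m`: `μ(E) = ∫ (μ|_γ)(E ∩ γ) dm(γ)`. -/
def IsDisint (m : Measure (SigmaA N A)) (μ : Measure (SigmaA N A × K))
    (T : SigmaA N A → Measure K) : Prop :=
  (∀ E : Set (SigmaA N A × K), MeasurableSet E →
      μ E = ∫⁻ γ, T γ {z | (γ, z) ∈ E} ∂m) ∧
  ∀ E : Set K, MeasurableSet E → Measurable fun γ => T γ E

/-- The (essential) `‖·‖_W`-Lipschitz constant of a path of measures,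
`|Γ|_θ^ω = ess sup_{γ₁ ≠ γ₂} ‖Γ(γ₁) - Γ(γ₂)‖_W / d_θ(γ₁,γ₂)`. -/
noncomputable def pathLip (m : Measure (SigmaA N A)) (θ : ℝ)
    (T : SigmaA N A → Measure K) : ℝ≥0∞ :=
  essSup (fun p : SigmaA N A × SigmaA N A =>
    wDist (T p.1) (T p.2) / ENNReal.ofReal (dTheta θ p.1 p.2)) (m.prod m)

/-- The Lipschitz constant `|μ|_θ` of a positive measure: the infimum over
disintegrations `ω` of `μ` of `|μ|_θ^ω`. -/
noncomputable def lipDisint (m : Measure (SigmaA N A)) (θ : ℝ)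
    (μ : Measure (SigmaA N A × K)) : ℝ≥0∞ :=
  ⨅ T : {T : SigmaA N A → Measure K // IsDisint m μ T}, pathLip m θ T.val

/-- The fiberwise transfer formula: the path representing `F^*μ` induced by the
path `T` representing `μ`, i.e.
`γ ↦ Σ_i 1_{σ([i])}(γ) (F_{iγ})_*(T(iγ)) / J_{m,σ_i}(iγ)`. -/
noncomputable def transferPath (G : SigmaA N A × K → K) (Jm : Fin N → SigmaA N A → ℝ)
    (T : SigmaA N A → Measure K) : SigmaA N A → Measure K :=
  fun γ => ∑ i : Fin N, if h : A i (γ.val 0) = true then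
      ENNReal.ofReal ((Jm i (prepend i γ h))⁻¹) •
        ((T (prepend i γ h)).map fun z => G (prepend i γ h, z))
    else 0

variable [BorelSpace K] [CompactSpace K] [Nonempty K]

/-- The fiberwise restriction `μ|_γ = π₂_* (φ₁(γ) μ_γ)` of a finite positive
measure `μ` on `Σ_A^+ × K`, where `({μ_γ}_γ, φ₁ m)` is the Rokhlin
disintegration of `μ` along the vertical fibers and `φ₁ = d(π₁_*μ)/dm`. -/
noncomputable def fiberR (m : Measure (SigmaA N A))
    (μ : Measure (SigmaA N A × K)) (γ : SigmaA N A) : Measure K := by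
  by_cases h : IsFiniteMeasure μ
  · haveI := h
    exact (μ.fst.rnDeriv m γ) • μ.condKernel γ
  · exact 0

/-- The norm `‖μ‖_∞ = ess sup_γ ‖μ|_γ‖_W` of a signed measure written as a
difference `μ = μ₁ - μ₂` of positive measures. -/
noncomputable def infNormPair (m : Measure (SigmaA N A))
    (μ₁ μ₂ : Measure (SigmaA N A × K)) : ℝ≥0∞ :=
  essSup (fun γ => wDist (fiberR m μ₁ γ) (fiberR m μ₂ γ)) m

/-- The marginal density `φ₁ = d(π₁_*μ)/dm` of the signed measure `μ = μ₁ - μ₂`. -/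
noncomputable def phiPair (m : Measure (SigmaA N A))
    (μ₁ μ₂ : Measure (SigmaA N A × K)) (γ : SigmaA N A) : ℝ :=
  (μ₁.fst.rnDeriv m γ).toReal - (μ₂.fst.rnDeriv m γ).toReal

/-- Membership in `AB`: both parts are finite with first marginal absolutely
continuous with respect to `m`. -/
def MemABPair (m : Measure (SigmaA N A)) (μ₁ μ₂ : Measure (SigmaA N A × K)) : Prop :=
  μ₁.fst ≪ m ∧ μ₂.fst ≪ m ∧ IsFiniteMeasure μ₁ ∧ IsFiniteMeasure μ₂

/-- Membership in `S^∞`: `μ ∈ AB`, `‖μ‖_∞ < ∞` and the marginal density `φ₁`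
has a `d_θ`-Lipschitz version. -/
def MemSPair (m : Measure (SigmaA N A)) (θ : ℝ)
    (μ₁ μ₂ : Measure (SigmaA N A × K)) : Prop :=
  MemABPair m μ₁ μ₂ ∧ infNormPair m μ₁ μ₂ < ⊤ ∧
    ∃ ψ : SigmaA N A → ℝ, ψ =ᵐ[m] phiPair m μ₁ μ₂ ∧ LipD (dTheta θ) ψ

/-- `‖φ₁‖_θ`, computed on the best version of the marginal density. -/
noncomputable def thetaNormMu (m : Measure (SigmaA N A)) (θ : ℝ)
    (μ₁ μ₂ : Measure (SigmaA N A × K)) : ℝ≥0∞ :=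
  ⨅ ψ : {ψ : SigmaA N A → ℝ // ψ =ᵐ[m] phiPair m μ₁ μ₂}, thetaNorm (dTheta θ) ψ.val

/-- The norm `‖μ‖_{S^∞} = ‖φ₁‖_θ + ‖μ‖_∞`. -/
noncomputable def sNormPair (m : Measure (SigmaA N A)) (θ : ℝ)
    (μ₁ μ₂ : Measure (SigmaA N A × K)) : ℝ≥0∞ :=
  thetaNormMu m θ μ₁ μ₂ + infNormPair m μ₁ μ₂

/-- Positive part of a signed measure. -/
noncomputable def jPos {X : Type*} [MeasurableSpace X] (μ : SignedMeasure X) : Measure X :=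
  μ.toJordanDecomposition.posPart

/-- Negative part of a signed measure. -/
noncomputable def jNeg {X : Type*} [MeasurableSpace X] (μ : SignedMeasure X) : Measure X :=
  μ.toJordanDecomposition.negPart

/-- Membership in `AB` for signed measures. -/
def MemAB (m : Measure (SigmaA N A)) (μ : SignedMeasure (SigmaA N A × K)) : Prop :=
  MemABPair m (jPos μ) (jNeg μ)

/-- Membership in `S^∞` for signed measures. -/
def MemS (m : Measure (SigmaA N A)) (θ : ℝ) (μ : SignedMeasure (SigmaA N A × K)) : Prop :=
  MemSPair m θ (jPos μ) (jNeg μ)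

/-- `‖μ‖_∞` for signed measures. -/
noncomputable def infNorm (m : Measure (SigmaA N A))
    (μ : SignedMeasure (SigmaA N A × K)) : ℝ≥0∞ :=
  infNormPair m (jPos μ) (jNeg μ)

/-- `‖μ‖_{S^∞}` for signed measures. -/
noncomputable def sNorm (m : Measure (SigmaA N A)) (θ : ℝ)
    (μ : SignedMeasure (SigmaA N A × K)) : ℝ≥0∞ :=
  sNormPair m θ (jPos μ) (jNeg μ)

/-- `‖φ₁‖_∞` of the marginal density of a signed measure. -/
noncomputable def phiSup (m : Measure (SigmaA N A))
    (μ : SignedMeasure (SigmaA N A × K)) : ℝ≥0∞ :=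
  essSup (fun γ => ENNReal.ofReal |phiPair m (jPos μ) (jNeg μ) γ|) m

/-! ### Auxiliary facts -/

set_option linter.unusedSectionVars false


theorem fiberR_eq (m : Measure (SigmaA N A)) (μ : Measure (SigmaA N A × K)) [h : IsFiniteMeasure μ]
    (γ : SigmaA N A) : fiberR m μ γ = (μ.fst.rnDeriv m γ) • μ.condKernel γ := by
  unfold fiberR
  rw [dif_pos h]

theorem fiber_integrable (m : Measure (SigmaA N A)) [IsProbabilityMeasure m]
    (μ : Measure (SigmaA N A × K)) [IsFiniteMeasure μ] (hac : μ.fst ≪ m)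
    (f : SigmaA N A × K → ℝ) (hf : Integrable f μ) :
    Integrable (fun γ => ∫ z, f (γ, z) ∂(fiberR m μ γ)) m := by
  simp only [fiberR_eq, integral_smul_measure]
  exact (integrable_rnDeriv_smul_iff hac).2 hf.integral_condKernel

theorem fiber_setIntegral (m : Measure (SigmaA N A)) [IsProbabilityMeasure m]
    (μ : Measure (SigmaA N A × K)) [IsFiniteMeasure μ] (hac : μ.fst ≪ m)
    (f : SigmaA N A × K → ℝ) (hf : Integrable f μ) (S : Set (SigmaA N A)) (hS : MeasurableSet S) :
    ∫ γ in S, ∫ z, f (γ, z) ∂(fiberR m μ γ) ∂m = ∫ p in S ×ˢ Set.univ, f p ∂μ := by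
  simp only [fiberR_eq, integral_smul_measure]
  rw [setIntegral_rnDeriv_smul hac hS, Measure.setIntegral_condKernel_univ_right hS hf.integrableOn]

theorem fiber_finite (m : Measure (SigmaA N A)) [IsProbabilityMeasure m]
    (μ : Measure (SigmaA N A × K)) [IsFiniteMeasure μ] :
    ∀ᵐ γ ∂m, IsFiniteMeasure (fiberR m μ γ) := by
  filter_upwards [Measure.rnDeriv_lt_top μ.fst m] with γ hγ
  rw [fiberR_eq]
  exact Measure.smul_finite _ hγ.ne

theorem fiber_one (m : Measure (SigmaA N A))
    (μ : Measure (SigmaA N A × K)) [IsFiniteMeasure μ] (γ : SigmaA N A) (c : ℝ) :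
    ∫ _z, c ∂(fiberR m μ γ) = c * (μ.fst.rnDeriv m γ).toReal := by
  rw [fiberR_eq, integral_smul_measure]
  simp [mul_comm]

theorem skew_iter_fst (G : SigmaA N A × K → K) (n : ℕ) (p : SigmaA N A × K) :
    ((skew G)^[n] p).1 = shift^[n] p.1 := by
  induction n with
  | zero => rfl
  | succ n ih => rw [Function.iterate_succ_apply', Function.iterate_succ_apply', ← ih]; rfl

theorem skew_iter_contr (G : SigmaA N A × K → K) (α : ℝ) (hα0 : 0 < α) (hG1 : CondG1 G α) (n : ℕ)
    (x : SigmaA N A) (z₁ z₂ : K) :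
    dist ((skew G)^[n] (x, z₁)).2 ((skew G)^[n] (x, z₂)).2 ≤ α ^ n * dist z₁ z₂ := by
  induction n with
  | zero => simp
  | succ n ih =>
    rw [Function.iterate_succ_apply', Function.iterate_succ_apply']
    have h1 := skew_iter_fst G n (x, z₁)
    have h2 := skew_iter_fst G n (x, z₂)
    generalize (skew G)^[n] (x, z₁) = p at *
    generalize (skew G)^[n] (x, z₂) = q at *
    obtain ⟨p1, p2⟩ := p
    obtain ⟨q1, q2⟩ := q
    simp only at h1 h2 ih
    subst h1; subst h2
    calc _ ≤ α * dist p2 q2 := hG1 _ _ _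
      _ ≤ α * (α ^ n * dist z₁ z₂) := by gcongr
      _ = _ := by ring

theorem measurable_shift : Measurable (shift : SigmaA N A → SigmaA N A) := by
  refine Measurable.subtype_mk ?_
  refine measurable_pi_lambda _ fun i => ?_
  exact (measurable_pi_apply (i + 1)).comp measurable_subtype_coe

theorem transfer_iter (G : SigmaA N A × K → K) (hG : Measurable (skew G)) (n : ℕ)
    (μ : SignedMeasure (SigmaA N A × K)) :
    (transfer G)^[n] μ = μ.map ((skew G)^[n]) := by
  induction n with
  | zero => simp
  | succ n ih =>
    rw [Function.iterate_succ_apply', ih, transfer]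
    ext E hE
    rw [VectorMeasure.map_apply _ hG hE, VectorMeasure.map_apply _ (hG.iterate n) (hG hE),
      VectorMeasure.map_apply _ (hG.iterate (n+1)) hE, Function.iterate_succ']
    rfl

theorem jordan_apply {X : Type*} [MeasurableSpace X] (μ : SignedMeasure X) (E : Set X)
    (hE : MeasurableSet E) : μ E = (jPos μ E).toReal - (jNeg μ E).toReal := by
  conv_lhs => rw [← μ.toSignedMeasure_toJordanDecomposition]
  simp [JordanDecomposition.toSignedMeasure, jPos, jNeg, Measure.toSignedMeasure_apply_measurable hE,
    Measure.real]

instance {X : Type*} [MeasurableSpace X] (μ : SignedMeasure X) : IsFiniteMeasure (jPos μ) :=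
  μ.toJordanDecomposition.posPart_finite

instance {X : Type*} [MeasurableSpace X] (μ : SignedMeasure X) : IsFiniteMeasure (jNeg μ) :=
  μ.toJordanDecomposition.negPart_finite

theorem map_balance {X : Type*} [MeasurableSpace X] (μ : SignedMeasure X) (T : X → X)
    (hT : Measurable T) :
    jPos (μ.map T) + (jNeg μ).map T = jNeg (μ.map T) + (jPos μ).map T := by
  ext E hE
  have h1 := jordan_apply (μ.map T) E hE
  rw [VectorMeasure.map_apply _ hT hE, jordan_apply μ _ (hT hE)] at h1
  simp only [Measure.add_apply, Measure.map_apply hT hE]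
  rw [← ENNReal.toReal_eq_toReal_iff' (by simp) (by simp), ENNReal.toReal_add (by simp) (by simp),
    ENNReal.toReal_add (by simp) (by simp)]
  linarith

theorem le_of_balance {X : Type*} [MeasurableSpace X] {a b c d : Measure X}
    (hab : a ⟂ₘ b) (h : a + d = b + c) : a ≤ c := by
  obtain ⟨S, hS, h1, h2⟩ := hab
  refine Measure.le_iff.2 fun E hE => ?_
  calc a E ≤ a (E ∩ S) + a (E \ S) := by
        rw [measure_inter_add_sdiff _ hS]
    _ ≤ 0 + a (E \ S) := by gcongr; exact (measure_mono inter_subset_right).trans h1.le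
    _ ≤ (a + d) (E \ S) := by simp
    _ = (b + c) (E \ S) := by rw [h]
    _ = b (E \ S) + c (E \ S) := by simp
    _ ≤ 0 + c E := by
        gcongr
        · exact (measure_mono (fun x hx => hx.2)).trans h2.le
        · exact sdiff_subset
    _ = c E := by simp

theorem jPos_map_le {X : Type*} [MeasurableSpace X] (μ : SignedMeasure X) (T : X → X)
    (hT : Measurable T) : jPos (μ.map T) ≤ (jPos μ).map T :=
  le_of_balance (SignedMeasure.toJordanDecomposition (μ.map T)).mutuallySingular (map_balance μ T hT)

theorem jNeg_map_le {X : Type*} [MeasurableSpace X] (μ : SignedMeasure X) (T : X → X)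
    (hT : Measurable T) : jNeg (μ.map T) ≤ (jNeg μ).map T :=
  le_of_balance (SignedMeasure.toJordanDecomposition (μ.map T)).mutuallySingular.symm (map_balance μ T hT).symm

theorem balance_setIntegral {X : Type*} [MeasurableSpace X] (μ : SignedMeasure X) (T : X → X)
    (hT : Measurable T) (f : X → ℝ) (hf : Measurable f) (C : ℝ) (hC : ∀ x, |f x| ≤ C)
    (E : Set X) (hE : MeasurableSet E) :
    ∫ x in E, f x ∂(jPos (μ.map T)) - ∫ x in E, f x ∂(jNeg (μ.map T)) =
      ∫ x in T ⁻¹' E, f (T x) ∂(jPos μ) - ∫ x in T ⁻¹' E, f (T x) ∂(jNeg μ) := by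
  have key := congrArg (fun ν : Measure X => ∫ x in E, f x ∂ν) (map_balance μ T hT)
  have hi : ∀ ν : Measure X, IsFiniteMeasure ν → Integrable f ν := fun ν _ =>
    Integrable.of_bound hf.aestronglyMeasurable C (Filter.Eventually.of_forall hC)
  simp only [Measure.restrict_add] at key
  rw [integral_add_measure (hi _ inferInstance) (hi _ inferInstance),
    integral_add_measure (hi _ inferInstance) (hi _ inferInstance),
    setIntegral_map hE hf.aestronglyMeasurable hT.aemeasurable,
    setIntegral_map hE hf.aestronglyMeasurable hT.aemeasurable] at key
  linarith

theorem map_fst_ac (m : Measure (SigmaA N A)) (hminv : m.map shift = m)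
    (G : SigmaA N A × K → K) (hG : Measurable (skew G)) (n : ℕ)
    (μ : Measure (SigmaA N A × K)) (hac : μ.fst ≪ m) : (μ.map ((skew G)^[n])).fst ≪ m := by
  have hs : Measurable (shift^[n] : SigmaA N A → SigmaA N A) := measurable_shift.iterate n
  have h1 : (μ.map ((skew G)^[n])).fst = μ.fst.map (shift^[n]) := by
    rw [Measure.fst, Measure.fst, Measure.map_map measurable_fst (hG.iterate n),
      Measure.map_map hs measurable_fst]
    congr 1
    funext p
    exact skew_iter_fst G n p
  have h2 : MeasurePreserving (shift^[n] : SigmaA N A → SigmaA N A) m m :=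
    MeasurePreserving.iterate ⟨measurable_shift, hminv⟩ n
  rw [h1]
  have := hac.map hs
  rwa [h2.map_eq] at this

/-- Integral of `f` along the fiber for a pair. -/
noncomputable def pairInt (m : Measure (SigmaA N A)) (μ₁ μ₂ : Measure (SigmaA N A × K))
    (f : SigmaA N A × K → ℝ) (γ : SigmaA N A) : ℝ :=
  ∫ z, f (γ, z) ∂(fiberR m μ₁ γ) - ∫ z, f (γ, z) ∂(fiberR m μ₂ γ)

theorem pairInt_one (m : Measure (SigmaA N A)) (μ₁ μ₂ : Measure (SigmaA N A × K))
    [IsFiniteMeasure μ₁] [IsFiniteMeasure μ₂] :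
    pairInt m μ₁ μ₂ (fun _ => 1) = phiPair m μ₁ μ₂ := by
  funext γ
  simp only [pairInt, phiPair, fiber_one, one_mul]

theorem pairInt_integrable (m : Measure (SigmaA N A)) [IsProbabilityMeasure m]
    (μ₁ μ₂ : Measure (SigmaA N A × K))
    [IsFiniteMeasure μ₁] [IsFiniteMeasure μ₂] (h1 : μ₁.fst ≪ m) (h2 : μ₂.fst ≪ m)
    (f : SigmaA N A × K → ℝ) (hf : Measurable f) (C : ℝ) (hC : ∀ x, |f x| ≤ C) :
    Integrable (pairInt m μ₁ μ₂ f) m :=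
  (fiber_integrable m μ₁ h1 f (Integrable.of_bound hf.aestronglyMeasurable C
    (Filter.Eventually.of_forall hC))).sub
  (fiber_integrable m μ₂ h2 f (Integrable.of_bound hf.aestronglyMeasurable C
    (Filter.Eventually.of_forall hC)))

theorem pairInt_setIntegral (m : Measure (SigmaA N A)) [IsProbabilityMeasure m]
    (μ₁ μ₂ : Measure (SigmaA N A × K))
    [IsFiniteMeasure μ₁] [IsFiniteMeasure μ₂] (h1 : μ₁.fst ≪ m) (h2 : μ₂.fst ≪ m)
    (f : SigmaA N A × K → ℝ) (hf : Measurable f) (C : ℝ) (hC : ∀ x, |f x| ≤ C)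
    (S : Set (SigmaA N A)) (hS : MeasurableSet S) :
    ∫ γ in S, pairInt m μ₁ μ₂ f γ ∂m =
      ∫ p in S ×ˢ Set.univ, f p ∂μ₁ - ∫ p in S ×ˢ Set.univ, f p ∂μ₂ := by
  have hi : ∀ ν : Measure (SigmaA N A × K), IsFiniteMeasure ν → Integrable f ν := fun ν _ =>
    Integrable.of_bound hf.aestronglyMeasurable C (Filter.Eventually.of_forall hC)
  unfold pairInt
  rw [integral_sub (fiber_integrable m μ₁ h1 f (hi _ inferInstance)).integrableOn
    (fiber_integrable m μ₂ h2 f (hi _ inferInstance)).integrableOn,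
    fiber_setIntegral m μ₁ h1 f (hi _ inferInstance) S hS,
    fiber_setIntegral m μ₂ h2 f (hi _ inferInstance) S hS]

/-- The key duality for the transfer operator. -/
theorem pairInt_transfer (m : Measure (SigmaA N A)) [IsProbabilityMeasure m]
    (hminv : m.map shift = m)
    (G : SigmaA N A × K → K) (hG : Measurable (skew G)) (n : ℕ)
    (μ : SignedMeasure (SigmaA N A × K)) (h1 : (jPos μ).fst ≪ m) (h2 : (jNeg μ).fst ≪ m)
    (f : SigmaA N A × K → ℝ) (hf : Measurable f) (C : ℝ) (hC : ∀ x, |f x| ≤ C) :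
    Integrable (pairInt m (jPos ((transfer G)^[n] μ)) (jNeg ((transfer G)^[n] μ)) f) m ∧
    ∀ S : Set (SigmaA N A), MeasurableSet S →
    ∫ γ in S, pairInt m (jPos ((transfer G)^[n] μ)) (jNeg ((transfer G)^[n] μ)) f γ ∂m =
      ∫ γ in shift^[n] ⁻¹' S, pairInt m (jPos μ) (jNeg μ) (f ∘ (skew G)^[n]) γ ∂m := by
  have hT := hG.iterate n
  rw [transfer_iter G hG]
  have a1 : (jPos (μ.map ((skew G)^[n]))).fst ≪ m :=
    (Measure.absolutelyContinuous_of_le (Measure.map_mono (jPos_map_le μ _ hT)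
      measurable_fst)).trans (map_fst_ac m hminv G hG n _ h1)
  have a2 : (jNeg (μ.map ((skew G)^[n]))).fst ≪ m :=
    (Measure.absolutelyContinuous_of_le (Measure.map_mono (jNeg_map_le μ _ hT)
      measurable_fst)).trans (map_fst_ac m hminv G hG n _ h2)
  refine ⟨pairInt_integrable m _ _ a1 a2 f hf C hC, fun S hS => ?_⟩
  rw [pairInt_setIntegral m _ _ a1 a2 f hf C hC S hS,
    pairInt_setIntegral m _ _ h1 h2 (f ∘ (skew G)^[n]) (hf.comp hT) C (fun x => hC _) _
      (measurable_shift.iterate n hS),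
    balance_setIntegral μ _ hT f hf C hC _ (hS.prod MeasurableSet.univ)]
  have : (skew G)^[n] ⁻¹' (S ×ˢ Set.univ) = (shift^[n] ⁻¹' S) ×ˢ (Set.univ : Set K) := by
    ext p
    simp [skew_iter_fst]
  rw [this]
  rfl

theorem wDist_bound (ν₁ ν₂ : Measure K) (M : ℝ≥0∞) (hM : M < ⊤) (h : wDist ν₁ ν₂ ≤ M)
    (c : ℝ) (hc : 0 < c) (k : K → ℝ) (hk : ∀ z w, |k z - k w| ≤ c * dist z w)
    (hb : ∀ z, |k z| ≤ c) :
    |∫ z, k z ∂ν₁ - ∫ z, k z ∂ν₂| ≤ c * M.toReal := by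
  have hl : LipschitzWith 1 (fun z => c⁻¹ * k z) := by
    refine LipschitzWith.of_dist_le_mul fun z w => ?_
    rw [Real.dist_eq, ← mul_sub, abs_mul, abs_of_pos (inv_pos.2 hc)]
    calc c⁻¹ * |k z - k w| ≤ c⁻¹ * (c * dist z w) := by gcongr; exact hk z w
      _ = _ := by field_simp; simp
  have hb' : ∀ z, |c⁻¹ * k z| ≤ 1 := fun z => by
    rw [abs_mul, abs_of_pos (inv_pos.2 hc)]
    calc c⁻¹ * |k z| ≤ c⁻¹ * c := by gcongr; exact hb z
      _ = 1 := by field_simp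
  have h1 : ENNReal.ofReal |∫ z, c⁻¹ * k z ∂ν₁ - ∫ z, c⁻¹ * k z ∂ν₂| ≤ M :=
    le_trans (le_iSup (fun g : {g : K → ℝ // LipschitzWith 1 g ∧ ∀ z, |g z| ≤ 1} =>
      ENNReal.ofReal |∫ z, g.val z ∂ν₁ - ∫ z, g.val z ∂ν₂|) ⟨_, hl, hb'⟩) h
  rw [ENNReal.ofReal_le_iff_le_toReal hM.ne, integral_const_mul, integral_const_mul, ← mul_sub,
    abs_mul, abs_of_pos (inv_pos.2 hc), inv_mul_le_iff₀ hc] at h1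
  exact h1

/-- A countable family of test functions suffices. -/
theorem exists_countable_test (K : Type*) [MetricSpace K] [CompactSpace K] [MeasurableSpace K]
    [BorelSpace K] :
    ∃ s : Set C(K, ℝ), s.Countable ∧ (∀ g ∈ s, LipschitzWith 1 g ∧ ∀ z, |g z| ≤ 1) ∧
      ∀ (ν₁ ν₂ : Measure K), IsFiniteMeasure ν₁ → IsFiniteMeasure ν₂ → ∀ C : ℝ,
        (∀ g ∈ s, |∫ z, g z ∂ν₁ - ∫ z, g z ∂ν₂| ≤ C) →
        wDist ν₁ ν₂ ≤ ENNReal.ofReal C := by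
  obtain ⟨s, hsub, hsc, hd⟩ := (TopologicalSpace.IsSeparable.of_separableSpace
    {g : C(K, ℝ) | LipschitzWith 1 g ∧ ∀ z, |g z| ≤ 1}).exists_countable_dense_subset
  refine ⟨s, hsc, fun g hg => hsub hg, fun ν₁ ν₂ _ _ C hC => iSup_le fun g => ?_⟩
  apply ENNReal.ofReal_le_ofReal
  let g' : C(K, ℝ) := ⟨g.1, g.2.1.continuous⟩
  have hcont : ∀ ν : Measure K, IsFiniteMeasure ν →
      Continuous fun g : C(K, ℝ) => ∫ z, g z ∂ν := fun ν _ => by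
    have hi : ∀ g : C(K, ℝ), Integrable g ν := fun g =>
      Integrable.of_bound g.continuous.aestronglyMeasurable ‖g‖
        (Filter.Eventually.of_forall g.norm_coe_le_norm)
    refine (LipschitzWith.of_dist_le_mul (K := (ν Set.univ).toNNReal) fun g h => ?_).continuous
    rw [Real.dist_eq, ← integral_sub (hi g) (hi h), dist_eq_norm, mul_comm]
    exact norm_integral_le_of_norm_le_const
      (Filter.Eventually.of_forall fun z => (g - h).norm_coe_le_norm z)
  have hcl : IsClosed {g : C(K, ℝ) | |∫ z, g z ∂ν₁ - ∫ z, g z ∂ν₂| ≤ C} :=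
    isClosed_le (((hcont ν₁ inferInstance).sub (hcont ν₂ inferInstance)).abs) continuous_const
  have : g' ∈ closure s := hd g.2
  exact closure_minimal (fun g hg => hC g hg) hcl this

/-! ### Bound on `‖F^{*n} μ‖_∞` -/

theorem phi_le_infNorm (m : Measure (SigmaA N A))
    (μ₁ μ₂ : Measure (SigmaA N A × K)) [IsFiniteMeasure μ₁] [IsFiniteMeasure μ₂]
    (hM : infNormPair m μ₁ μ₂ < ⊤) :
    ∀ᵐ γ ∂m, |phiPair m μ₁ μ₂ γ| ≤ (infNormPair m μ₁ μ₂).toReal := by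
  filter_upwards [ENNReal.ae_le_essSup (μ := m) fun γ => wDist (fiberR m μ₁ γ) (fiberR m μ₂ γ)]
    with γ hγ
  have := wDist_bound _ _ _ hM hγ 1 one_pos (fun _ => 1) (by simp) (by simp)
  rw [one_mul] at this
  rwa [← pairInt_one]

theorem infNorm_transfer_le (m : Measure (SigmaA N A)) [IsProbabilityMeasure m]
    (hminv : m.map shift = m) (hdiam : Metric.diam (Set.univ : Set K) = 1)
    (G : SigmaA N A × K → K) (hG : Measurable (skew G))
    (α : ℝ) (hα0 : 0 < α) (hG1 : CondG1 G α) (n : ℕ)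
    (μ : SignedMeasure (SigmaA N A × K)) (h1 : (jPos μ).fst ≪ m) (h2 : (jNeg μ).fst ≪ m)
    (hM : infNorm m μ < ⊤) :
    infNorm m ((transfer G)^[n] μ) ≤ ENNReal.ofReal (α ^ n) * infNorm m μ + infNorm m μ := by
  set M := (infNorm m μ).toReal with hMdef
  have hM0 : 0 ≤ M := ENNReal.toReal_nonneg
  have hrhs : ENNReal.ofReal (α ^ n) * infNorm m μ + infNorm m μ
      = ENNReal.ofReal (α ^ n * M + M) := by
    rw [ENNReal.ofReal_add (by positivity) hM0, ENNReal.ofReal_mul (by positivity),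
      ENNReal.ofReal_toReal hM.ne]
  rw [hrhs]
  obtain ⟨s, hsc, hs, htest⟩ := exists_countable_test K
  have hαn : 0 < α ^ n := by positivity
  -- pointwise bound for `μ`
  have hpt : ∀ g ∈ s, ∀ᵐ γ ∂m,
      |pairInt m (jPos μ) (jNeg μ) ((fun p => g p.2) ∘ (skew G)^[n]) γ| ≤ α ^ n * M + M := by
    intro g hg
    obtain ⟨hgl, hgb⟩ := hs g hg
    filter_upwards [ENNReal.ae_le_essSup (μ := m)
      fun γ => wDist (fiberR m (jPos μ) γ) (fiberR m (jNeg μ) γ),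
      fiber_finite m (jPos μ), fiber_finite m (jNeg μ), phi_le_infNorm m (jPos μ) (jNeg μ) hM]
      with γ hγ hf1 hf2 hphi
    obtain ⟨z₀⟩ := ‹Nonempty K›
    set c := g ((skew G)^[n] (γ, z₀)).2 with hc
    set k : K → ℝ := fun z => g ((skew G)^[n] (γ, z)).2 - c with hk
    have hlip : ∀ z w, |k z - k w| ≤ α ^ n * dist z w := fun z w => by
      have := hgl.dist_le_mul ((skew G)^[n] (γ, z)).2 ((skew G)^[n] (γ, w)).2
      rw [Real.dist_eq] at this
      simp only [hk, sub_sub_sub_cancel_right]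
      refine this.trans ?_
      simpa using skew_iter_contr G α hα0 hG1 n γ z w
    have hd : ∀ z w : K, dist z w ≤ 1 := fun z w => by
      rw [← hdiam]
      exact Metric.dist_le_diam_of_mem isCompact_univ.isBounded (mem_univ _) (mem_univ _)
    have hbd : ∀ z, |k z| ≤ α ^ n := fun z => by
      have h := hlip z z₀
      have hz : k z₀ = 0 := by simp [hk, hc]
      rw [hz, sub_zero] at h
      exact h.trans (mul_le_of_le_one_right hαn.le (hd _ _))
    have hw := wDist_bound _ _ _ hM hγ (α ^ n) hαn k hlip hbd
    have hkm : Measurable k := by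
      refine Measurable.sub_const ?_ c
      exact g.continuous.measurable.comp
        (measurable_snd.comp ((hG.iterate n).comp measurable_prodMk_left))
    have hki : ∀ ν : Measure K, IsFiniteMeasure ν → Integrable k ν := fun ν _ =>
      Integrable.of_bound hkm.aestronglyMeasurable (α ^ n) (Filter.Eventually.of_forall hbd)
    have hsplit : pairInt m (jPos μ) (jNeg μ) ((fun p => g p.2) ∘ (skew G)^[n]) γ
        = (∫ z, k z ∂(fiberR m (jPos μ) γ) - ∫ z, k z ∂(fiberR m (jNeg μ) γ))
          + c * phiPair m (jPos μ) (jNeg μ) γ := by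
      have e : ∀ z, ((fun p : SigmaA N A × K => g p.2) ∘ (skew G)^[n]) (γ, z) = k z + c :=
        fun z => by simp [hk]
      simp only [pairInt, e]
      rw [integral_add (hki _ hf1) (integrable_const _), integral_add (hki _ hf2)
        (integrable_const _), fiber_one, fiber_one, phiPair]
      ring
    rw [hsplit]
    have hc1 : |c| ≤ 1 := hgb _
    calc _ ≤ _ := abs_add_le _ _
      _ ≤ α ^ n * M + 1 * M := by
        refine add_le_add hw ?_
        rw [abs_mul]
        exact mul_le_mul hc1 hphi (abs_nonneg _) zero_le_one
      _ = _ := by ring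
  have hmp : MeasurePreserving (shift^[n] : SigmaA N A → SigmaA N A) m m :=
    MeasurePreserving.iterate ⟨measurable_shift, hminv⟩ n
  set B := α ^ n * M + M with hB
  have hfin : ∀ g ∈ s, ∀ᵐ γ ∂m,
      |pairInt m (jPos ((transfer G)^[n] μ)) (jNeg ((transfer G)^[n] μ)) (fun p => g p.2) γ|
        ≤ B := by
    intro g hg
    have hgm : Measurable (fun p : SigmaA N A × K => g p.2) :=
      g.continuous.measurable.comp measurable_snd
    have hgb : ∀ p : SigmaA N A × K, |g p.2| ≤ 1 := fun p => (hs g hg).2 _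
    obtain ⟨hint, hset⟩ := pairInt_transfer m hminv G hG n μ h1 h2 _ hgm 1 hgb
    have hint0 := pairInt_integrable m (jPos μ) (jNeg μ) h1 h2
      ((fun p : SigmaA N A × K => g p.2) ∘ (skew G)^[n])
      (hgm.comp (hG.iterate n)) 1 (fun p => hgb ((skew G)^[n] p))
    have hconst : ∀ (b : ℝ) (S : Set (SigmaA N A)), MeasurableSet S →
        ∫ _γ in shift^[n] ⁻¹' S, b ∂m = ∫ _γ in S, b ∂m := fun b S hS => by
      simp only [setIntegral_const, Measure.real, hmp.measure_preimage hS.nullMeasurableSet]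
    have up := ae_le_of_forall_setIntegral_le hint (integrable_const B) fun S hS _ => by
      rw [hset S hS, ← hconst B S hS]
      refine setIntegral_mono_ae hint0.integrableOn (integrable_const _).integrableOn ?_
      filter_upwards [hpt g hg] with γ hγ using (abs_le.1 hγ).2
    have lo := ae_le_of_forall_setIntegral_le (integrable_const (-B)) hint fun S hS _ => by
      rw [hset S hS, ← hconst (-B) S hS]
      refine setIntegral_mono_ae (integrable_const _).integrableOn hint0.integrableOn ?_
      filter_upwards [hpt g hg] with γ hγ using (abs_le.1 hγ).1
    filter_upwards [up, lo] with γ ha hb using abs_le.2 ⟨hb, ha⟩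
  refine essSup_le_of_ae_le _ ?_
  filter_upwards [(ae_ball_iff hsc).2 hfin, fiber_finite m (jPos ((transfer G)^[n] μ)),
    fiber_finite m (jNeg ((transfer G)^[n] μ))] with γ hγ hf1 hf2
  exact htest _ _ hf1 hf2 _ hγ

/-! ### The marginal density -/

theorem dTheta_summable (θ : ℝ) (hθ0 : 0 < θ) (hθ1 : θ < 1) (x y : SigmaA N A) :
    Summable fun i : ℕ => θ ^ i * (if x.val i = y.val i then (0 : ℝ) else 1) := by
  refine Summable.of_nonneg_of_le (fun i => ?_) (fun i => ?_)
    (summable_geometric_of_lt_one hθ0.le hθ1)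
  · split_ifs <;> simp [hθ0.le]
  · split_ifs <;> simp [hθ0.le]

theorem dTheta_nonneg (θ : ℝ) (hθ0 : 0 < θ) (x y : SigmaA N A) : 0 ≤ dTheta θ x y :=
  tsum_nonneg fun i => by split_ifs <;> simp [hθ0.le]

theorem dTheta_pos (θ : ℝ) (hθ0 : 0 < θ) (hθ1 : θ < 1) (x y : SigmaA N A) (h : x ≠ y) :
    0 < dTheta θ x y := by
  obtain ⟨i, hi⟩ : ∃ i, x.val i ≠ y.val i := by
    by_contra! hc
    exact h (Subtype.ext (funext hc))
  refine (dTheta_summable θ hθ0 hθ1 x y).tsum_pos (fun i => ?_) i ?_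
  · split_ifs <;> simp [hθ0.le]
  · rw [if_neg hi, mul_one]; positivity

theorem dTheta_le (θ : ℝ) (hθ0 : 0 < θ) (hθ1 : θ < 1) (x y : SigmaA N A) :
    dTheta θ x y ≤ (1 - θ)⁻¹ := by
  rw [← tsum_geometric_of_lt_one hθ0.le hθ1]
  refine (dTheta_summable θ hθ0 hθ1 x y).tsum_le_tsum (fun i => ?_)
    (summable_geometric_of_lt_one hθ0.le hθ1)
  split_ifs <;> simp [hθ0.le]

theorem dTheta_continuous (θ : ℝ) (hθ0 : 0 < θ) (hθ1 : θ < 1) (x : SigmaA N A) :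
    Continuous fun y : SigmaA N A => dTheta θ x y := by
  refine continuous_tsum (u := fun i => θ ^ i) (fun i => ?_)
    (summable_geometric_of_lt_one hθ0.le hθ1) (fun i y => ?_)
  · have h : Continuous fun a : Fin N => θ ^ i * (if x.val i = a then (0 : ℝ) else 1) :=
      continuous_of_discreteTopology
    exact h.comp ((continuous_apply i).comp continuous_subtype_val)
  · split_ifs <;> simp [abs_of_pos hθ0, hθ0.le]

theorem LipD.continuous {θ : ℝ} (hθ0 : 0 < θ) (hθ1 : θ < 1) {f : SigmaA N A → ℝ}
    (hf : LipD (dTheta θ) f) : Continuous f := by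
  obtain ⟨L, hL⟩ := hf
  refine continuous_iff_continuousAt.2 fun x => ?_
  have h0 : dTheta θ x x = 0 := by simp [dTheta]
  have ht : Filter.Tendsto (fun y => L * dTheta θ x y) (nhds x) (nhds 0) := by
    have := ((dTheta_continuous θ hθ0 hθ1 x).const_mul L).tendsto x
    simpa [h0] using this
  rw [ContinuousAt, tendsto_iff_dist_tendsto_zero]
  refine squeeze_zero (fun _ => dist_nonneg) (fun y => ?_) ht
  rw [dist_comm, Real.dist_eq]
  exact hL x y

theorem LipD.bounded {θ : ℝ} (hθ0 : 0 < θ) (hθ1 : θ < 1) {f : SigmaA N A → ℝ}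
    (hf : LipD (dTheta θ) f) : ∃ C, ∀ x, |f x| ≤ C := by
  obtain ⟨L, hL⟩ := hf
  rcases isEmpty_or_nonempty (SigmaA N A) with h | ⟨⟨x₀⟩⟩
  · exact ⟨0, fun x => h.elim x⟩
  · refine ⟨|f x₀| + |L| * (1 - θ)⁻¹, fun x => ?_⟩
    have h1 : L * dTheta θ x x₀ ≤ |L| * (1 - θ)⁻¹ :=
      mul_le_mul (le_abs_self L) (dTheta_le θ hθ0 hθ1 _ _) (dTheta_nonneg θ hθ0 _ _) (abs_nonneg _)
    have h2 := hL x x₀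
    have h3 := abs_sub_abs_le_abs_sub (f x) (f x₀)
    linarith

theorem LipD.integrable {θ : ℝ} (hθ0 : 0 < θ) (hθ1 : θ < 1) {f : SigmaA N A → ℝ}
    (hf : LipD (dTheta θ) f) (m : Measure (SigmaA N A)) [IsProbabilityMeasure m] :
    Integrable f m := by
  obtain ⟨C, hC⟩ := hf.bounded hθ0 hθ1
  exact Integrable.of_bound (hf.continuous hθ0 hθ1).measurable.aestronglyMeasurable C
    (Filter.Eventually.of_forall hC)

theorem lipD_of_thetaNorm {θ : ℝ} (hθ0 : 0 < θ) (hθ1 : θ < 1) {f : SigmaA N A → ℝ}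
    (hf : thetaNorm (dTheta θ) f < ⊤) : LipD (dTheta θ) f := by
  have hl : lipConst (dTheta θ) f < ⊤ := lt_of_le_of_lt le_add_self hf
  refine ⟨(lipConst (dTheta θ) f).toReal, fun x y => ?_⟩
  rcases eq_or_ne x y with rfl | hxy
  · simp [dTheta]
  have h : ENNReal.ofReal (|f x - f y| / dTheta θ x y) ≤ lipConst (dTheta θ) f :=
    le_iSup₂ (f := fun x y => ENNReal.ofReal (|f x - f y| / dTheta θ x y)) x y
  rw [ENNReal.ofReal_le_iff_le_toReal hl.ne, div_le_iff₀ (dTheta_pos θ hθ0 hθ1 x y hxy)] at h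
  exact h

theorem thetaNorm_of_lipD {θ : ℝ} (hθ0 : 0 < θ) (hθ1 : θ < 1) {f : SigmaA N A → ℝ}
    (hf : LipD (dTheta θ) f) : thetaNorm (dTheta θ) f < ⊤ := by
  obtain ⟨C, hC⟩ := hf.bounded hθ0 hθ1
  obtain ⟨L, hL⟩ := hf
  refine ENNReal.add_lt_top.2 ⟨?_, ?_⟩
  · exact lt_of_le_of_lt (iSup_le fun x => ENNReal.ofReal_le_ofReal (hC x)) ENNReal.ofReal_lt_top
  · refine lt_of_le_of_lt (iSup₂_le (a := ENNReal.ofReal |L|) fun x y => ?_) ENNReal.ofReal_lt_top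
    apply ENNReal.ofReal_le_ofReal
    rcases eq_or_ne x y with rfl | hxy
    · simp
    rw [div_le_iff₀ (dTheta_pos θ hθ0 hθ1 x y hxy)]
    exact (hL x y).trans (mul_le_mul_of_nonneg_right (le_abs_self L) (dTheta_nonneg θ hθ0 _ _))

theorem PF_iter (m : Measure (SigmaA N A)) [IsProbabilityMeasure m]
    {θ : ℝ} (hθ0 : 0 < θ) (hθ1 : θ < 1)
    (Pσ : (SigmaA N A → ℝ) → SigmaA N A → ℝ) (hPF : IsPerronFrobenius m Pσ)
    (hP : ∀ φ, LipD (dTheta θ) φ → LipD (dTheta θ) (Pσ φ))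
    (φ : SigmaA N A → ℝ) (hφ : LipD (dTheta θ) φ) (n : ℕ) :
    LipD (dTheta θ) (Pσ^[n] φ) ∧ ∀ S, MeasurableSet S →
      ∫ x in S, Pσ^[n] φ x ∂m = ∫ x in shift^[n] ⁻¹' S, φ x ∂m := by
  induction n with
  | zero => exact ⟨hφ, fun S _ => rfl⟩
  | succ n ih =>
    obtain ⟨h1, h2⟩ := ih
    rw [Function.iterate_succ_apply']
    refine ⟨hP _ h1, fun S hS => ?_⟩
    have h3 := hPF (Pσ^[n] φ) (S.indicator 1) (h1.integrable hθ0 hθ1 m)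
      (measurable_one.indicator hS) ⟨1, fun x => by
        by_cases hx : x ∈ S <;> simp [hx]⟩
    have e1 : ∀ x, Pσ (Pσ^[n] φ) x * S.indicator 1 x = S.indicator (Pσ (Pσ^[n] φ)) x := fun x => by
      by_cases hx : x ∈ S <;> simp [hx]
    have e2 : ∀ x, Pσ^[n] φ x * S.indicator 1 (shift x)
        = (shift ⁻¹' S).indicator (Pσ^[n] φ) x := fun x => by
      by_cases hx : shift x ∈ S <;> simp [hx]
    simp only [e1, e2] at h3
    rw [integral_indicator hS, integral_indicator (measurable_shift hS),
      h2 _ (measurable_shift hS)] at h3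
    rw [h3, Function.iterate_succ']
    rfl

theorem thetaNormMu_transfer_le (m : Measure (SigmaA N A)) [IsProbabilityMeasure m]
    (hminv : m.map shift = m) {θ : ℝ} (hθ0 : 0 < θ) (hθ1 : θ < 1)
    (G : SigmaA N A × K → K) (hG : Measurable (skew G))
    (Pσ : (SigmaA N A → ℝ) → SigmaA N A → ℝ) (hPF : IsPerronFrobenius m Pσ)
    (C₂ : ℝ)
    (hLY : ∀ φ : SigmaA N A → ℝ, LipD (dTheta θ) φ → ∀ n : ℕ, 1 ≤ n →
      thetaNorm (dTheta θ) (Pσ^[n] φ) ≤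
        ENNReal.ofReal (θ ^ n) * thetaNorm (dTheta θ) φ +
          ENNReal.ofReal C₂ * supNormE φ)
    (μ : SignedMeasure (SigmaA N A × K)) (h1 : (jPos μ).fst ≪ m) (h2 : (jNeg μ).fst ≪ m)
    (hM : infNorm m μ < ⊤) (n : ℕ) (hn : 1 ≤ n) :
    thetaNormMu m θ (jPos ((transfer G)^[n] μ)) (jNeg ((transfer G)^[n] μ)) ≤
      ENNReal.ofReal (θ ^ n) * thetaNormMu m θ (jPos μ) (jNeg μ) +
        ENNReal.ofReal C₂ * infNorm m μ := by
  have hθn : 0 < θ ^ n := by positivity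
  have hsupth : ∀ φ : SigmaA N A → ℝ, supNormE φ ≤ thetaNorm (dTheta θ) φ := fun φ => le_self_add
  have hP : ∀ φ, LipD (dTheta θ) φ → LipD (dTheta θ) (Pσ φ) := fun φ hφ => by
    have hfin := thetaNorm_of_lipD hθ0 hθ1 hφ
    refine lipD_of_thetaNorm hθ0 hθ1 (lt_of_le_of_lt (hLY φ hφ 1 le_rfl) ?_)
    exact ENNReal.add_lt_top.2 ⟨ENNReal.mul_lt_top ENNReal.ofReal_lt_top hfin,
      ENNReal.mul_lt_top ENNReal.ofReal_lt_top ((hsupth φ).trans_lt hfin)⟩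
  conv_rhs => rw [thetaNormMu]
  rw [ENNReal.mul_iInf_of_ne (by simpa using hθn) ENNReal.ofReal_ne_top, ENNReal.iInf_add]
  refine le_iInf fun ⟨ψ, hψ⟩ => ?_
  dsimp only
  by_cases htop : thetaNorm (dTheta θ) ψ = ⊤
  · rw [htop, ENNReal.mul_top (by simpa using hθn)]
    simp
  have hψL := lipD_of_thetaNorm hθ0 hθ1 (lt_top_iff_ne_top.2 htop)
  set M := (infNorm m μ).toReal with hMdef
  have hM0 : 0 ≤ M := ENNReal.toReal_nonneg
  set ψ' : SigmaA N A → ℝ := fun x => max (-M) (min (ψ x) M) with hψ'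
  have hdiff : ∀ x y, |ψ' x - ψ' y| ≤ |ψ x - ψ y| := fun x y => by
    refine (abs_max_sub_max_le_max _ _ _ _).trans ?_
    rw [sub_self, abs_zero, max_eq_right (abs_nonneg _)]
    refine (abs_min_sub_min_le_max _ _ _ _).trans ?_
    rw [sub_self, abs_zero, max_eq_left (abs_nonneg _)]
  have hb1 : ∀ x, |ψ' x| ≤ M := fun x => by
    rw [abs_le]
    exact ⟨le_max_left _ _, max_le (by linarith) (min_le_right _ _)⟩
  have hb2 : ∀ x, |ψ' x| ≤ |ψ x| := fun x => by
    rw [abs_le]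
    constructor
    · refine le_max_of_le_right (le_min (neg_abs_le _) ?_)
      linarith [abs_nonneg (ψ x)]
    · refine max_le (by linarith [abs_nonneg (ψ x)]) ((min_le_left _ _).trans (le_abs_self _))
  have hae : ψ' =ᵐ[m] phiPair m (jPos μ) (jNeg μ) := by
    filter_upwards [hψ, phi_le_infNorm m (jPos μ) (jNeg μ) hM] with x hx hx2
    have : -M ≤ phiPair m (jPos μ) (jNeg μ) x ∧ phiPair m (jPos μ) (jNeg μ) x ≤ M := abs_le.1 hx2
    change max (-M) (min (ψ x) M) = _
    rw [hx, min_eq_left this.2, max_eq_right this.1]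
  have hψ'L : LipD (dTheta θ) ψ' := by
    obtain ⟨L, hL⟩ := hψL
    exact ⟨L, fun x y => (hdiff x y).trans (hL x y)⟩
  have hth : thetaNorm (dTheta θ) ψ' ≤ thetaNorm (dTheta θ) ψ := by
    refine add_le_add (iSup_mono fun x => ENNReal.ofReal_le_ofReal (hb2 x))
      (iSup₂_mono fun x y => ENNReal.ofReal_le_ofReal ?_)
    exact div_le_div_of_nonneg_right (hdiff x y) (dTheta_nonneg θ hθ0 _ _)
  have hsup : supNormE ψ' ≤ infNorm m μ :=
    iSup_le fun x => (ENNReal.ofReal_le_iff_le_toReal hM.ne).2 (hb1 x)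
  obtain ⟨hLn, hint⟩ := PF_iter m hθ0 hθ1 Pσ hPF hP ψ' hψ'L n
  obtain ⟨hi, hset⟩ := pairInt_transfer m hminv G hG n μ h1 h2 (fun _ => 1) measurable_const 1
    (by simp)
  have hver : Pσ^[n] ψ' =ᵐ[m]
      phiPair m (jPos ((transfer G)^[n] μ)) (jNeg ((transfer G)^[n] μ)) := by
    rw [← pairInt_one]
    refine Integrable.ae_eq_of_forall_setIntegral_eq _ _ (hLn.integrable hθ0 hθ1 m) hi
      fun S hS _ => ?_
    rw [hint S hS, hset S hS]
    refine integral_congr_ae (ae_restrict_of_ae ?_)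
    have : ((fun _ => (1 : ℝ)) ∘ (skew G)^[n] : SigmaA N A × K → ℝ) = fun _ => 1 := rfl
    rw [this, pairInt_one]
    exact hae
  calc _ ≤ thetaNorm (dTheta θ) (Pσ^[n] ψ') :=
        iInf_le (fun ψ : {ψ : SigmaA N A → ℝ // ψ =ᵐ[m]
          phiPair m (jPos ((transfer G)^[n] μ)) (jNeg ((transfer G)^[n] μ))} =>
            thetaNorm (dTheta θ) ψ.val) ⟨_, hver⟩
    _ ≤ _ := hLY ψ' hψ'L n hn
    _ ≤ _ := by gcongr

/-- **Lasota–Yorke inequality for `S^∞`.**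
With `α₁ = max{θ, α}` and `B₄ = C₂ + 1/(1-α)`, for every `μ ∈ S^∞` and
`n ≥ 1`, `‖F^{*n}μ‖_{S^∞} ≤ 2 α₁^n ‖μ‖_{S^∞} + B₄ ‖μ‖_∞`. -/
theorem transfer_LasotaYorke_Sinfty
    (N : ℕ) (A : Fin N → Fin N → Bool) (hA : Aperiodic A)
    (θ : ℝ) (hθ0 : 0 < θ) (hθ1 : θ < 1)
    (m : Measure (SigmaA N A)) [IsProbabilityMeasure m]
    (hmM : IsMarkov m) (hminv : m.map shift = m)
    {K : Type*} [MetricSpace K] [CompactSpace K] [Nonempty K]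
    [MeasurableSpace K] [BorelSpace K]
    (hdiam : Metric.diam (Set.univ : Set K) = 1)
    (G : SigmaA N A × K → K) (hGm : Measurable (skew G))
    (α : ℝ) (hα0 : 0 < α) (hα1 : α < 1) (hG1 : CondG1 G α)
    (Pσ : (SigmaA N A → ℝ) → SigmaA N A → ℝ) (hPF : IsPerronFrobenius m Pσ)
    (C₂ : ℝ) (hC₂ : 0 < C₂)
    (hLY : ∀ φ : SigmaA N A → ℝ, LipD (dTheta θ) φ → ∀ n : ℕ, 1 ≤ n →
      thetaNorm (dTheta θ) (Pσ^[n] φ) ≤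
        ENNReal.ofReal (θ ^ n) * thetaNorm (dTheta θ) φ +
          ENNReal.ofReal C₂ * supNormE φ) :
    ∀ μ : SignedMeasure (SigmaA N A × K), MemS m θ μ → ∀ n : ℕ, 1 ≤ n →
      sNorm m θ ((transfer G)^[n] μ) ≤
        ENNReal.ofReal (2 * max θ α ^ n) * sNorm m θ μ +
          ENNReal.ofReal (C₂ + 1 / (1 - α)) * infNorm m μ := by
  intro μ hμ n hn
  obtain ⟨⟨h1, h2, -, -⟩, hM, -⟩ := hμ
  have hI := infNorm_transfer_le m hminv hdiam G hGm α hα0 hG1 n μ h1 h2 hM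
  have hT := thetaNormMu_transfer_le m hminv hθ0 hθ1 G hGm Pσ hPF C₂ hLY μ h1 h2 hM n hn
  have hmx : 0 ≤ max θ α := hθ0.le.trans (le_max_left _ _)
  have e1 : θ ^ n ≤ 2 * max θ α ^ n := by
    have := pow_le_pow_left₀ hθ0.le (le_max_left θ α) n
    have := pow_nonneg hmx n
    linarith
  have e2 : α ^ n ≤ 2 * max θ α ^ n := by
    have := pow_le_pow_left₀ hα0.le (le_max_right θ α) n
    have := pow_nonneg hmx n
    linarith
  have e3 : 1 ≤ 1 / (1 - α) := by
    rw [le_div_iff₀ (by linarith)]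
    linarith
  change thetaNormMu m θ (jPos ((transfer G)^[n] μ)) (jNeg ((transfer G)^[n] μ)) +
    infNorm m ((transfer G)^[n] μ) ≤ ENNReal.ofReal (2 * max θ α ^ n) *
      (thetaNormMu m θ (jPos μ) (jNeg μ) + infNorm m μ) + _
  calc _ ≤ _ := add_le_add hT hI
    _ ≤ (ENNReal.ofReal (2 * max θ α ^ n) * thetaNormMu m θ (jPos μ) (jNeg μ) +
          ENNReal.ofReal C₂ * infNorm m μ) + (ENNReal.ofReal (2 * max θ α ^ n) * infNorm m μ +
          ENNReal.ofReal (1 / (1 - α)) * infNorm m μ) := by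
        gcongr
        calc infNorm m μ = 1 * infNorm m μ := (one_mul _).symm
          _ ≤ _ := by
            gcongr
            rw [← ENNReal.ofReal_one]
            exact ENNReal.ofReal_le_ofReal e3
    _ = _ := by
        rw [ENNReal.ofReal_add hC₂.le (by linarith)]
        ring

end RDS
end

section
/- Suppose F satisfies (G1) and (G2). Let μ ∈ L_θ^+ be a positive measure with a disintegration ω, and let Γ^ω_{F_*μ} be the path representing F^*μ given by the transfer formula Γ^ω_{F_*μ}(γ) = Σ_{i=1}^N 1_{σ([i])}(γ) · (F_{iγ})_*(μ|_{iγ}) · g_i(iγ), where iγ denotes γ with the symbol i prepended. Then |Γ^ω_{F_*μ}|_θ^ω ≤ θ |μ|_θ^ω + C₁ ‖μ‖_∞, where C₁ = max{Hθ + θN|g|_θ, 2}. -/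
open MeasureTheory ENNReal Set

namespace RDS

variable {N : ℕ} {A : Fin N → Fin N → Bool}

variable {K : Type*} [MetricSpace K] [MeasurableSpace K]

variable [BorelSpace K] [CompactSpace K] [Nonempty K]

/-- The inverse branch, extended by the identity where it is not defined. -/
noncomputable def qmap (i : Fin N) (x : SigmaA N A) : SigmaA N A :=
  if h : A i (x.val 0) = true then prepend i x h else x

theorem qmap_of (i : Fin N) (x : SigmaA N A) (h : A i (x.val 0) = true) :
    qmap i x = prepend i x h := by simp [qmap, h]

theorem measSet_B (i : Fin N) : MeasurableSet {x : SigmaA N A | A i (x.val 0) = true} := by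
  have h1 : Measurable fun x : SigmaA N A => x.val 0 :=
    (measurable_pi_apply 0).comp measurable_subtype_coe
  exact h1 (MeasurableSet.of_discrete (s := {j : Fin N | A i j = true}))

theorem measSet_C (i : Fin N) : MeasurableSet {x : SigmaA N A | x.val 0 = i} := by
  have h1 : Measurable fun x : SigmaA N A => x.val 0 :=
    (measurable_pi_apply 0).comp measurable_subtype_coe
  exact h1 (MeasurableSet.of_discrete (s := {j : Fin N | j = i}))

theorem measurable_qmap (i : Fin N) : Measurable (qmap i : SigmaA N A → SigmaA N A) := by
  have key : Measurable fun x : SigmaA N A => (qmap i x).val := by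
    refine measurable_pi_lambda _ fun n => ?_
    have : (fun x : SigmaA N A => (qmap i x).val n) = fun x : SigmaA N A =>
        if A i (x.val 0) = true then (match n with
          | 0 => i
          | Nat.succ k => x.val k) else x.val n := by
      funext x
      by_cases h : A i (x.val 0) = true
      · rw [qmap_of i x h, if_pos h]; rfl
      · simp [qmap, h]
    rw [this]
    refine Measurable.ite (measSet_B i) ?_ ?_
    · cases n with
      | zero => exact measurable_const
      | succ k => exact (measurable_pi_apply k).comp measurable_subtype_coe
    · exact (measurable_pi_apply n).comp measurable_subtype_coe
  exact Measurable.subtype_mk (f := fun x : SigmaA N A => (qmap i x).val) key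

theorem shift_prepend (i : Fin N) (x : SigmaA N A) (h : A i (x.val 0) = true) :
    shift (prepend i x h) = x := by
  apply Subtype.ext; funext n; rfl

theorem one_le_dTheta (θ : ℝ) (hθ0 : 0 < θ) (hθ1 : θ < 1) (x y : SigmaA N A)
    (h : x.val 0 ≠ y.val 0) : 1 ≤ dTheta θ x y := by
  have := (dTheta_summable θ hθ0 hθ1 x y).le_tsum 0 (fun i _ => by split_ifs <;> positivity)
  simpa [h, dTheta] using this

theorem dTheta_prepend (θ : ℝ) (hθ0 : 0 < θ) (hθ1 : θ < 1) (i : Fin N) (x y : SigmaA N A)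
    (hx : A i (x.val 0) = true) (hy : A i (y.val 0) = true) :
    dTheta θ (prepend i x hx) (prepend i y hy) = θ * dTheta θ x y := by
  unfold dTheta
  rw [(dTheta_summable θ hθ0 hθ1 _ _).tsum_eq_zero_add, ← tsum_mul_left]
  have h0 : (prepend i x hx).val 0 = (prepend i y hy).val 0 := rfl
  rw [if_pos h0, mul_zero, zero_add]
  refine tsum_congr fun n => ?_
  have h1 : (prepend i x hx).val (n+1) = x.val n := rfl
  have h2 : (prepend i y hy).val (n+1) = y.val n := rfl
  rw [h1, h2]; ring

theorem dTheta_cont (θ : ℝ) (hθ0 : 0 < θ) (hθ1 : θ < 1) (x : SigmaA N A) :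
    Continuous fun y => dTheta θ y x := by
  unfold dTheta
  refine continuous_tsum (u := fun i => θ ^ i) (fun i => ?_)
    (summable_geometric_of_lt_one hθ0.le hθ1) (fun i y => ?_)
  · have h1 : Continuous fun y : SigmaA N A => y.val i :=
      (continuous_apply i).comp continuous_subtype_val
    have h2 : Continuous fun j : Fin N => θ ^ i * (if j = x.val i then (0 : ℝ) else 1) :=
      continuous_of_discreteTopology
    exact h2.comp h1
  · rw [Real.norm_of_nonneg (by split_ifs <;> positivity)]
    split_ifs
    · simp; positivity
    · simp

theorem dTheta_self (θ : ℝ) (x : SigmaA N A) : dTheta θ x x = 0 := by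
  simp [dTheta]

theorem lip_measurable (θ : ℝ) (hθ0 : 0 < θ) (hθ1 : θ < 1) (L : ℝ) (f : SigmaA N A → ℝ)
    (hf : LipWithD (dTheta θ) L f) : Measurable f := by
  have : Continuous f := by
    rw [continuous_iff_continuousAt]
    intro x
    rw [ContinuousAt, tendsto_iff_dist_tendsto_zero]
    have h1 : Filter.Tendsto (fun y => L * dTheta θ y x) (nhds x) (nhds 0) := by
      have := ((dTheta_cont θ hθ0 hθ1 x).const_mul L).tendsto x
      simpa [dTheta_self] using this
    exact squeeze_zero (fun _ => dist_nonneg) (fun y => hf y x) h1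
  exact this.measurable

section meas
variable (m : Measure (SigmaA N A)) (Jm : Fin N → SigmaA N A → ℝ)

theorem map_qmap (hJ : IsJacobian m Jm) (i : Fin N) :
    (m.restrict {x | A i (x.val 0) = true}).map (qmap i) =
      (m.restrict {x | x.val 0 = i}).withDensity fun x => ENNReal.ofReal (Jm i x) := by
  ext E hE
  rw [Measure.map_apply (measurable_qmap i) hE, withDensity_apply _ hE,
    Measure.restrict_apply ((measurable_qmap i) hE), Measure.restrict_restrict hE, ← hJ i E hE]
  congr 1
  ext γ
  constructor
  · rintro ⟨h1, h2⟩
    exact ⟨h2, by rw [← qmap_of i γ h2]; exact h1⟩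
  · rintro ⟨h, h'⟩
    refine ⟨?_, h⟩
    rw [← qmap_of i γ h] at h'; exact h'

theorem qmp_qmap (hJ : IsJacobian m Jm) (i : Fin N) :
    Measure.QuasiMeasurePreserving (qmap i) m m := by
  refine ⟨measurable_qmap i, ?_⟩
  refine Measure.AbsolutelyContinuous.mk fun E hE h0 => ?_
  rw [Measure.map_apply (measurable_qmap i) hE,
    ← measure_inter_add_sdiff _ (measSet_B i)]
  have h1 : m (qmap i ⁻¹' E ∩ {x | A i (x.val 0) = true}) = 0 := by
    have := map_qmap m Jm hJ i
    have h2 := congrArg (fun ν => ν E) this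
    rw [Measure.map_apply (measurable_qmap i) hE,
      Measure.restrict_apply ((measurable_qmap i) hE)] at h2
    rw [h2]
    exact withDensity_absolutelyContinuous _ _ (Measure.absolutelyContinuous_of_le Measure.restrict_le_self h0)
  have h3 : m (qmap i ⁻¹' E \ {x | A i (x.val 0) = true}) = 0 := by
    refine measure_mono_null ?_ h0
    rintro γ ⟨h, h'⟩
    have h' : ¬ A i (γ.val 0) = true := h'
    have : qmap i γ = γ := by simp [qmap, h']
    rw [Set.mem_preimage, this] at h; exact h
  rw [h1, h3, add_zero]

/-- The weight of the `i`-th branch in the transfer formula. -/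
noncomputable def wt (i : Fin N) (γ : SigmaA N A) : ℝ≥0∞ :=
  if A i (γ.val 0) = true then ENNReal.ofReal ((Jm i (qmap i γ))⁻¹) else 0

theorem wt_sum_le [IsProbabilityMeasure m] (hJ : IsJacobian m Jm) (hminv : m.map shift = m)
    (hg : ∀ i, Measurable fun x => (Jm i x)⁻¹) :
    ∀ᵐ γ ∂m, ∑ i, wt Jm i γ ≤ 1 := by
  have hJm : ∀ i, Measurable (Jm i) := fun i => by
    have h := (hg i).inv
    have e : (fun x => (Jm i x)⁻¹)⁻¹ = Jm i := by funext x; simp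
    rwa [e] at h
  have hw : ∀ i, Measurable (wt Jm i) := fun i =>
    Measurable.ite (measSet_B i) (((hg i).comp (measurable_qmap i)).ennreal_ofReal) measurable_const
  have key : (fun γ => ∑ i, wt Jm i γ) ≤ᵐ[m] fun _ => (1 : ℝ≥0∞) := by
    refine ae_le_of_forall_setLIntegral_le_of_sigmaFinite
      (Finset.measurable_sum _ fun i _ => hw i) fun E hE _ => ?_
    rw [lintegral_finsetSum _ fun i _ => hw i, setLIntegral_one]
    have hsE : MeasurableSet (shift ⁻¹' E : Set (SigmaA N A)) := measurable_shift hE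
    have step : ∀ i, ∫⁻ γ in E, wt Jm i γ ∂m ≤ m (shift ⁻¹' E ∩ {x | x.val 0 = i}) := by
      intro i
      set f : SigmaA N A → ℝ≥0∞ := (shift ⁻¹' E).indicator fun x => ENNReal.ofReal ((Jm i x)⁻¹) with hf
      have hfm : Measurable f := (hg i).ennreal_ofReal.indicator hsE
      have e1 : ∫⁻ γ in E, wt Jm i γ ∂m
          = ∫⁻ x, f x ∂((m.restrict {x | A i (x.val 0) = true}).map (qmap i)) := by
        rw [lintegral_map hfm (measurable_qmap i), ← lintegral_indicator hE,
          ← lintegral_indicator (measSet_B i)]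
        congr 1
        funext γ
        by_cases h : A i (γ.val 0) = true
        · have hs : shift (qmap i γ) = γ := by rw [qmap_of i γ h, shift_prepend]
          by_cases hγ : γ ∈ E
          · simp [hf, Set.indicator, h, hγ, hs, wt]
          · simp [hf, Set.indicator, h, hγ, hs]
        · simp [Set.indicator, h, wt]
      rw [e1, map_qmap m Jm hJ i, lintegral_withDensity_eq_lintegral_mul _
        (hJm i).ennreal_ofReal hfm, ← Measure.restrict_apply hsE, ← lintegral_indicator_one hsE]
      refine lintegral_mono fun x => ?_
      by_cases hx : x ∈ shift ⁻¹' E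
      · simp only [Pi.mul_apply, hf, Set.indicator_of_mem hx, Pi.one_apply]
        by_cases hp : 0 < Jm i x
        · rw [← ENNReal.ofReal_mul hp.le, mul_inv_cancel₀ hp.ne']; simp
        · rw [ENNReal.ofReal_of_nonpos (not_lt.1 hp)]; simp
      · simp [hf, Set.indicator_of_notMem hx]
    refine (Finset.sum_le_sum fun i _ => step i).trans ?_
    rw [← measure_biUnion_finset]
    · calc _ ≤ m (shift ⁻¹' E) := measure_mono (by
            intro x hx; simp only [Set.mem_iUnion] at hx; obtain ⟨i, _, hx⟩ := hx; exact hx.1)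
        _ = m E := by rw [← Measure.map_apply measurable_shift hE, hminv]
    · intro i _ j _ hij
      refine Set.disjoint_left.2 ?_
      rintro x ⟨_, h1⟩ ⟨_, h2⟩
      exact hij (h1.symm.trans h2)
    · exact fun i _ => hsE.inter (measSet_C i)
  exact key

end meas

section fiber
variable (G : SigmaA N A × K → K) (Jm : Fin N → SigmaA N A → ℝ) (T : SigmaA N A → Measure K)

theorem wt_ne_top (i : Fin N) (γ : SigmaA N A) : wt Jm i γ ≠ ⊤ := by
  unfold wt; split_ifs <;> simp

theorem integrable_test (ν : Measure K) [IsFiniteMeasure ν] (h : K → ℝ) (hc : Continuous h)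
    (hb : ∀ z, |h z| ≤ 1) : Integrable h ν :=
  Integrable.of_bound hc.aestronglyMeasurable 1 (Filter.Eventually.of_forall hb)

theorem integral_transferPath (γ : SigmaA N A) (hGc : ∀ x, Continuous fun z => G (x, z))
    (hfin : ∀ i, IsFiniteMeasure (T (qmap i γ))) (h : K → ℝ) (hc : Continuous h)
    (hb : ∀ z, |h z| ≤ 1) :
    ∫ z, h z ∂(transferPath G Jm T γ) =
      ∑ i, (wt Jm i γ).toReal * ∫ z, h (G (qmap i γ, z)) ∂(T (qmap i γ)) := by
  have e : transferPath G Jm T γ =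
      ∑ i, wt Jm i γ • (T (qmap i γ)).map fun z => G (qmap i γ, z) := by
    unfold transferPath
    refine Finset.sum_congr rfl fun i _ => ?_
    by_cases hi : A i (γ.val 0) = true
    · simp only [hi, dif_pos, wt, if_true, qmap_of i γ hi]
    · simp [hi, wt]
  rw [e, integral_finsetSum_measure]
  · refine Finset.sum_congr rfl fun i _ => ?_
    rw [integral_smul_measure, integral_map (hGc _).measurable.aemeasurable
      hc.aestronglyMeasurable, smul_eq_mul]
  · intro i _
    haveI := hfin i
    exact (integrable_test _ h hc hb).smul_measure (wt_ne_top Jm i γ)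

theorem abs_integral_le_mass (ν : Measure K) [IsFiniteMeasure ν] (h : K → ℝ) (C : ℝ)
    (hb : ∀ z, |h z| ≤ C) : |∫ z, h z ∂ν| ≤ C * ν.real Set.univ := by
  have := norm_integral_le_of_norm_le_const (μ := ν) (f := h) (C := C)
    (Filter.Eventually.of_forall hb)
  simpa using this

theorem mass_le_wDist (ν : Measure K) [IsFiniteMeasure ν] : ν Set.univ ≤ wDist ν 0 := by
  refine le_trans ?_ (le_iSup _ ⟨fun _ => 1, LipschitzWith.const' 1, by simp⟩)
  simp [Measure.real]

theorem abs_le_of_wDist_le (ν₁ ν₂ : Measure K) (C : ℝ) (hC : 0 ≤ C)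
    (hw : wDist ν₁ ν₂ ≤ ENNReal.ofReal C) (h : K → ℝ) (hl : LipschitzWith 1 h)
    (hb : ∀ z, |h z| ≤ 1) : |∫ z, h z ∂ν₁ - ∫ z, h z ∂ν₂| ≤ C := by
  have := (le_iSup (fun g : {g : K → ℝ // LipschitzWith 1 g ∧ ∀ z, |g z| ≤ 1} =>
    ENNReal.ofReal |∫ z, g.val z ∂ν₁ - ∫ z, g.val z ∂ν₂|) ⟨h, hl, hb⟩).trans hw
  exact (ENNReal.ofReal_le_ofReal_iff hC).1 this

theorem wt_toReal_sum_le (γ : SigmaA N A) (h : ∑ i, wt Jm i γ ≤ 1) :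
    ∑ i, (wt Jm i γ).toReal ≤ 1 := by
  rw [← ENNReal.toReal_sum fun i _ => wt_ne_top Jm i γ]
  simpa using ENNReal.toReal_mono ENNReal.one_ne_top h

/-- The pointwise estimate. -/
theorem pointwise_bound (θ : ℝ) (hθ0 : 0 < θ) (hθ1 : θ < 1)
    (α : ℝ) (hα0 : 0 < α) (hα1 : α < 1) (hG1 : CondG1 G α)
    (H : ℝ) (hG2 : CondG2 θ G H)
    (gLip : ℝ) (hgLip : ∀ i : Fin N, LipWithD (dTheta θ) gLip fun x => (Jm i x)⁻¹)
    (L M : ℝ) (hL : 0 ≤ L) (hM : 0 ≤ M) (x y : SigmaA N A)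
    (hfx : ∀ i, IsFiniteMeasure (T (qmap i x))) (hfy : ∀ i, IsFiniteMeasure (T (qmap i y)))
    (hmx : ∀ i, (T (qmap i x)).real Set.univ ≤ M) (hmy : ∀ i, (T (qmap i y)).real Set.univ ≤ M)
    (hw : ∀ i, wDist (T (qmap i x)) (T (qmap i y)) ≤
      ENNReal.ofReal (L * dTheta θ (qmap i x) (qmap i y)))
    (hsx : ∑ i, wt Jm i x ≤ 1) (hsy : ∑ i, wt Jm i y ≤ 1) :
    wDist (transferPath G Jm T x) (transferPath G Jm T y) ≤
      ENNReal.ofReal ((θ * L + max (H * θ + θ * (N : ℝ) * gLip) 2 * M) * dTheta θ x y) := by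
  have hGl : ∀ x, LipschitzWith 1 fun z => G (x, z) := fun x =>
    LipschitzWith.of_dist_le_mul fun z₁ z₂ => by
      refine (hG1 x z₁ z₂).trans ?_
      have := dist_nonneg (x := z₁) (y := z₂)
      simp only [NNReal.coe_one]; nlinarith
  have hGc : ∀ x, Continuous fun z => G (x, z) := fun x => (hGl x).continuous
  refine iSup_le ?_
  rintro ⟨h, hl, hb⟩
  refine ENNReal.ofReal_le_ofReal ?_
  simp only
  have hc := hl.continuous
  rw [integral_transferPath G Jm T x hGc hfx h hc hb, integral_transferPath G Jm T y hGc hfy h hc hb]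
  have hsx' := wt_toReal_sum_le Jm x hsx
  have hsy' := wt_toReal_sum_le Jm y hsy
  set d := dTheta θ x y with hd
  have hd0 : 0 ≤ d := dTheta_nonneg θ hθ0 x y
  have hX : ∀ i, |∫ z, h (G (qmap i x, z)) ∂(T (qmap i x))| ≤ M := fun i => by
    haveI := hfx i
    have := abs_integral_le_mass (T (qmap i x)) (fun z => h (G (qmap i x, z))) 1 (fun z => hb _)
    linarith [hmx i]
  have hY : ∀ i, |∫ z, h (G (qmap i y, z)) ∂(T (qmap i y))| ≤ M := fun i => by
    haveI := hfy i
    have := abs_integral_le_mass (T (qmap i y)) (fun z => h (G (qmap i y, z))) 1 (fun z => hb _)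
    linarith [hmy i]
  by_cases h0 : x.val 0 = y.val 0
  · have hHd : 0 ≤ H * d := by
      obtain ⟨z⟩ := (inferInstance : Nonempty K)
      exact dist_nonneg.trans (hG2 z x y)
    have hgd : ∀ i : Fin N, 0 ≤ gLip * d := fun i => (abs_nonneg _).trans (hgLip i x y)
    have term : ∀ i, |(wt Jm i x).toReal * ∫ z, h (G (qmap i x, z)) ∂(T (qmap i x)) -
        (wt Jm i y).toReal * ∫ z, h (G (qmap i y, z)) ∂(T (qmap i y))| ≤
        (wt Jm i x).toReal * (L * (θ * d) + H * (θ * d) * M) + gLip * (θ * d) * M := by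
      intro i
      have hgθ : 0 ≤ gLip * (θ * d) := by
        have := mul_nonneg hθ0.le (hgd i); linarith
      by_cases hi : A i (x.val 0) = true
      · have hi' : A i (y.val 0) = true := h0 ▸ hi
        have hdi : dTheta θ (qmap i x) (qmap i y) = θ * d := by
          rw [qmap_of i x hi, qmap_of i y hi', dTheta_prepend θ hθ0 hθ1]
        haveI := hfx i
        haveI := hfy i
        have a0 : 0 ≤ (wt Jm i x).toReal := ENNReal.toReal_nonneg
        have e1 : |∫ z, h (G (qmap i x, z)) ∂(T (qmap i x)) -
            ∫ z, h (G (qmap i x, z)) ∂(T (qmap i y))| ≤ L * (θ * d) := by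
          refine abs_le_of_wDist_le _ _ _ (by positivity) (hdi ▸ hw i)
            (fun z => h (G (qmap i x, z))) ?_ (fun z => hb _)
          have hcomp := hl.comp (hGl (qmap i x))
          rw [one_mul] at hcomp
          exact hcomp
        have e2 : |∫ z, h (G (qmap i x, z)) ∂(T (qmap i y)) -
            ∫ z, h (G (qmap i y, z)) ∂(T (qmap i y))| ≤ H * (θ * d) * M := by
          rw [← integral_sub (integrable_test _ (fun z => h (G (qmap i x, z)))
            (hc.comp (hGc _)) (fun z => hb _)) (integrable_test _ (fun z => h (G (qmap i y, z)))
            (hc.comp (hGc _)) (fun z => hb _))]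
          refine (abs_integral_le_mass _ _ (H * (θ * d)) fun z => ?_).trans ?_
          · have := hl.dist_le_mul (G (qmap i x, z)) (G (qmap i y, z))
            rw [Real.dist_eq] at this
            have h3 := hG2 z (qmap i x) (qmap i y)
            rw [hdi] at h3
            simp only [NNReal.coe_one, one_mul] at this
            exact this.trans h3
          · refine mul_le_mul_of_nonneg_left (hmy i) ?_
            have := mul_nonneg hθ0.le hHd; linarith
        have e3 : |(wt Jm i x).toReal - (wt Jm i y).toReal| ≤ gLip * (θ * d) := by
          have := hgLip i (qmap i x) (qmap i y)
          rw [hdi] at this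
          simp only [wt, hi, hi', if_true, ENNReal.toReal_ofReal']
          exact (abs_max_sub_max_le_abs _ _ _).trans this
        have e4 := hY i
        generalize (wt Jm i x).toReal = a at *
        generalize (wt Jm i y).toReal = b at *
        generalize ∫ z, h (G (qmap i x, z)) ∂(T (qmap i x)) = P at *
        generalize ∫ z, h (G (qmap i x, z)) ∂(T (qmap i y)) = Q at *
        generalize ∫ z, h (G (qmap i y, z)) ∂(T (qmap i y)) = R at *
        have e : a * P - b * R = a * ((P - Q) + (Q - R)) + (a - b) * R := by ring
        rw [e]
        refine (abs_add_le _ _).trans (add_le_add ?_ ?_)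
        · rw [abs_mul, abs_of_nonneg a0]
          exact mul_le_mul_of_nonneg_left ((abs_add_le _ _).trans (add_le_add e1 e2)) a0
        · rw [abs_mul]
          exact mul_le_mul e3 e4 (abs_nonneg _) hgθ
      · have hi' : ¬ A i (y.val 0) = true := h0 ▸ hi
        simp only [wt, hi, hi']
        simpa using mul_nonneg hgθ hM
    rw [← Finset.sum_sub_distrib]
    refine (Finset.abs_sum_le_sum_abs _ _).trans ((Finset.sum_le_sum fun i _ => term i).trans ?_)
    rw [Finset.sum_add_distrib, ← Finset.sum_mul, Finset.sum_const, Finset.card_univ,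
      Fintype.card_fin, nsmul_eq_mul]
    have hc0 : 0 ≤ L * (θ * d) + H * (θ * d) * M := by
      have h1 : 0 ≤ L * (θ * d) := by positivity
      have h2 : 0 ≤ θ * (H * d) * M := by positivity
      linarith
    have h1 := mul_le_mul_of_nonneg_right hsx' hc0
    have h2 : (H * θ + θ * (N : ℝ) * gLip) * (M * d) ≤
        max (H * θ + θ * (N : ℝ) * gLip) 2 * (M * d) :=
      mul_le_mul_of_nonneg_right (le_max_left _ _) (by positivity)
    linarith
  · have hd1 : 1 ≤ d := one_le_dTheta θ hθ0 hθ1 x y h0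
    have b1 : ∀ γ : SigmaA N A, (∑ i, (wt Jm i γ).toReal ≤ 1) →
        (∀ i, |∫ z, h (G (qmap i γ, z)) ∂(T (qmap i γ))| ≤ M) →
        |∑ i, (wt Jm i γ).toReal * ∫ z, h (G (qmap i γ, z)) ∂(T (qmap i γ))| ≤ M := by
      intro γ hs hm
      refine (Finset.abs_sum_le_sum_abs _ _).trans ?_
      calc _ ≤ ∑ i, (wt Jm i γ).toReal * M := Finset.sum_le_sum fun i _ => by
            rw [abs_mul, abs_of_nonneg ENNReal.toReal_nonneg]
            exact mul_le_mul_of_nonneg_left (hm i) ENNReal.toReal_nonneg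
        _ ≤ M := by
            rw [← Finset.sum_mul]
            have := mul_le_mul_of_nonneg_right hs hM
            linarith
    have hx1 := b1 x hsx' hX
    have hy1 := b1 y hsy' hY
    have h2 : 2 * (M * d) ≤ max (H * θ + θ * (N : ℝ) * gLip) 2 * (M * d) :=
      mul_le_mul_of_nonneg_right (le_max_right _ _) (by positivity)
    have h3 : M ≤ M * d := le_mul_of_one_le_right hM hd1
    have h4 : 0 ≤ θ * L * d := by positivity
    refine (abs_sub _ _).trans ?_
    linarith

end fiber

/-- Under (G1) and (G2), for a positive measure
`μ ∈ L_θ^+` with disintegration (path) `T`, the path `Γ^ω_{F_*μ}` of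
`F^*μ` given by the transfer formula satisfies
`|Γ^ω_{F_*μ}|_θ^ω ≤ θ |μ|_θ^ω + C₁ ‖μ‖_∞`, with
`C₁ = max{Hθ + θN|g|_θ, 2}`. -/
theorem transfer_path_lipschitz_bound
    (N : ℕ) (A : Fin N → Fin N → Bool) (hA : Aperiodic A)
    (θ : ℝ) (hθ0 : 0 < θ) (hθ1 : θ < 1)
    (m : Measure (SigmaA N A)) [IsProbabilityMeasure m]
    (hmM : IsMarkov m) (hminv : m.map shift = m)
    {K : Type*} [MetricSpace K] [CompactSpace K] [Nonempty K]
    [MeasurableSpace K] [BorelSpace K]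
    (hdiam : Metric.diam (Set.univ : Set K) = 1)
    (G : SigmaA N A × K → K) (hGm : Measurable (skew G))
    (α : ℝ) (hα0 : 0 < α) (hα1 : α < 1) (hG1 : CondG1 G α)
    (H : ℝ) (hG2 : CondG2 θ G H)
    (Jm : Fin N → SigmaA N A → ℝ) (hJ : IsJacobian m Jm)
    (gLip : ℝ) (hgLip : ∀ i : Fin N, LipWithD (dTheta θ) gLip fun x => (Jm i x)⁻¹)
    (μ : Measure (SigmaA N A × K)) [IsFiniteMeasure μ]
    (hAC : μ.fst ≪ m) (hLtheta : lipDisint m θ μ < ⊤)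
    (T : SigmaA N A → Measure K) (hT : IsDisint m μ T) :
    pathLip m θ (transferPath G Jm T) ≤
      ENNReal.ofReal θ * pathLip m θ T +
        ENNReal.ofReal (max (H * θ + θ * (N : ℝ) * gLip) 2) *
          essSup (fun γ => wDist (T γ) 0) m := by
  have hg : ∀ i, Measurable fun x => (Jm i x)⁻¹ := fun i =>
    lip_measurable θ hθ0 hθ1 gLip _ (hgLip i)
  set L := pathLip m θ T with hLdef
  set M := essSup (fun γ => wDist (T γ) 0) m with hMdef
  set C := max (H * θ + θ * (N : ℝ) * gLip) 2 with hCdef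
  have hC : 2 ≤ C := le_max_right _ _
  by_cases hLt : L = ⊤
  · rw [hLt, ENNReal.mul_top (by simpa using hθ0)]; simp
  by_cases hMt : M = ⊤
  · rw [hMt, ENNReal.mul_top (by simp only [ne_eq, ENNReal.ofReal_eq_zero]; linarith)]; simp
  have hfin : ∀ᵐ γ ∂m, T γ Set.univ < ⊤ := by
    refine ae_lt_top (hT.2 _ MeasurableSet.univ) ?_
    have := hT.1 Set.univ MeasurableSet.univ
    simp only [Set.mem_univ, Set.ofPred_true] at this
    rw [← this]; exact measure_ne_top _ _
  have hMae : ∀ᵐ γ ∂m, wDist (T γ) 0 ≤ M := ENNReal.ae_le_essSup _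
  have hLae : ∀ᵐ p ∂(m.prod m), wDist (T p.1) (T p.2) / ENNReal.ofReal (dTheta θ p.1 p.2) ≤ L :=
    ENNReal.ae_le_essSup _
  have hgood : ∀ᵐ γ ∂m, (∀ i, T (qmap i γ) Set.univ < ⊤ ∧ wDist (T (qmap i γ)) 0 ≤ M) ∧
      ∑ i, wt Jm i γ ≤ 1 := by
    refine Filter.Eventually.and (ae_all_iff.2 fun i => ?_) (wt_sum_le m Jm hJ hminv hg)
    exact (qmp_qmap m Jm hJ i).ae (hfin.and hMae)
  have hg1 := (Measure.quasiMeasurePreserving_fst (μ := m) (ν := m)).ae hgood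
  have hg2 := (Measure.quasiMeasurePreserving_snd (μ := m) (ν := m)).ae hgood
  have hg3 : ∀ᵐ p ∂(m.prod m), ∀ i, wDist (T (qmap i p.1)) (T (qmap i p.2)) /
      ENNReal.ofReal (dTheta θ (qmap i p.1) (qmap i p.2)) ≤ L :=
    ae_all_iff.2 fun i =>
      (MeasureTheory.QuasiMeasurePreserving.prodMap (qmp_qmap m Jm hJ i) (qmp_qmap m Jm hJ i)).ae hLae
  refine essSup_le_of_ae_le _ ?_
  filter_upwards [hg1, hg2, hg3] with p h1 h2 h3
  refine ENNReal.div_le_of_le_mul ?_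
  have hmass : ∀ γ, T γ Set.univ < ⊤ → wDist (T γ) 0 ≤ M → (T γ).real Set.univ ≤ M.toReal := by
    intro γ hf hm
    haveI : IsFiniteMeasure (T γ) := ⟨hf⟩
    exact ENNReal.toReal_mono hMt ((mass_le_wDist (T γ)).trans hm)
  have key := pointwise_bound G Jm T θ hθ0 hθ1 α hα0 hα1 hG1 H hG2 gLip hgLip L.toReal M.toReal
    ENNReal.toReal_nonneg ENNReal.toReal_nonneg p.1 p.2
    (fun i => ⟨(h1.1 i).1⟩) (fun i => ⟨(h2.1 i).1⟩)
    (fun i => hmass _ (h1.1 i).1 (h1.1 i).2) (fun i => hmass _ (h2.1 i).1 (h2.1 i).2)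
    (fun i => by
      rw [ENNReal.ofReal_mul ENNReal.toReal_nonneg, ENNReal.ofReal_toReal hLt]
      exact (ENNReal.div_le_iff_le_mul (Or.inr hLt) (Or.inl ENNReal.ofReal_ne_top)).1 (h3 i))
    h1.2 h2.2
  refine key.trans (le_of_eq ?_)
  have hL0 := ENNReal.toReal_nonneg (a := L)
  have hM0 := ENNReal.toReal_nonneg (a := M)
  have hC0 : 0 ≤ C := by linarith
  rw [ENNReal.ofReal_mul (by positivity), ENNReal.ofReal_add (by positivity) (by positivity),
    ENNReal.ofReal_mul hθ0.le, ENNReal.ofReal_mul hC0, ENNReal.ofReal_toReal hLt,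
    ENNReal.ofReal_toReal hMt]


end RDS
end
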